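/- Let Ω ⊂ ℝ² be a nonempty bounded open simply connected set, B smooth on a neighborhood of the closure of Ω with B(x) > 0 for all x in the closure of Ω, ψ smooth on a neighborhood of the closure of Ω with Δψ = B in Ω and ψ = 0 on ∂Ω, ψ_min := inf_Ω ψ, and A = (−∂₂ψ, ∂₁ψ) the canonical vector potential. Then h · log λ_{P₋}(h) converges to 2ψ_min as h → 0⁺, i.e., the function h ↦ h·log λ_{P₋}(h) tends to 2 inf_Ω ψ along h → 0 from the right. -/

import Mathlib

/-!
Write `u = e^{-ψ/h} v`. The Pauli operator factors through `∂_z̄`, so that after integrating by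
parts (`pauli_factor`, `pauliQ_gauge`)

  `Q_h(u) = h² ∫ e^{-2ψ/h} |(∂₁ + i∂₂) v|²`,  `‖u‖² = ∫ e^{-2ψ/h} |v|²`.

Since `Δψ = B > 0` and `ψ = 0` on `∂Ω`, the maximum principle gives `m ≤ ψ < 0` in `Ω`, with
`m = inf_Ω ψ` (`neg_of_subharmonic`).

*Lower bound* (`rayleigh_lower`). As `e^{-2ψ/h} ≥ 1`, `Q_h(u) ≥ h² ∫ |(∂₁ + i∂₂) v|²`, which equals
`h² ∫ |∇v|²` because `v` has compact support. Poincaré's inequality bounds this below by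
`c h² ∫ |v|² ≥ c h² e^{2m/h} ‖u‖²`.

*Upper bound* (`rayleigh_upper`). Take for `v` a cutoff `χ` equal to `1` on `{ψ ≤ -ε}`. Its
gradient lives where `ψ ≥ -ε`, so `Q_h(u) ≤ C h² e^{2ε/h}`, while `‖u‖²` is at least the
volume of `{ψ < m + ε}` times `e^{-2(m+ε)/h}`.

Taking `h log` of both bounds and letting `h → 0⁺`, then `ε → 0`, gives the limit. At the outset
`ψ` is replaced by a globally smooth function that agrees with it on the closure of `Ω`.
-/

open MeasureTheory Filter Topology

noncomputable section

abbrev E2 : Type := EuclideanSpace ℝ (Fin 2)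

/-- Partial derivative of a complex-valued function in the `i`-th coordinate direction. -/
def pdC (i : Fin 2) (f : E2 → ℂ) (x : E2) : ℂ :=
  fderiv ℝ f x (EuclideanSpace.single i 1)

/-- Partial derivative of a real-valued function in the `i`-th coordinate direction. -/
def pdR (i : Fin 2) (f : E2 → ℝ) (x : E2) : ℝ :=
  fderiv ℝ f x (EuclideanSpace.single i 1)

/-- The Laplacian `Δf = ∂₁²f + ∂₂²f`. -/
def lapl (f : E2 → ℝ) (x : E2) : ℝ :=
  pdR 0 (pdR 0 f) x + pdR 1 (pdR 1 f) x

/-- The Pauli quadratic form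
`Q_h(u) = ∫_Ω (|h∂₁u − iA₁u|² + |h∂₂u − iA₂u|²) dx − h∫_Ω B|u|² dx`. -/
def pauliQ (Ω : Set E2) (A₁ A₂ B : E2 → ℝ) (h : ℝ) (u : E2 → ℂ) : ℝ :=
  (∫ x in Ω, (‖(h : ℂ) * pdC 0 u x - Complex.I * (A₁ x : ℂ) * u x‖ ^ 2
      + ‖(h : ℂ) * pdC 1 u x - Complex.I * (A₂ x : ℂ) * u x‖ ^ 2))
    - h * ∫ x in Ω, B x * ‖u x‖ ^ 2

/-- `u ∈ C_c^∞(Ω; ℂ)`. -/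
def IsCptSmoothIn (Ω : Set E2) (u : E2 → ℂ) : Prop :=
  ContDiff ℝ (⊤ : ℕ∞) u ∧ HasCompactSupport u ∧ tsupport u ⊆ Ω

/-- The lowest Dirichlet Pauli eigenvalue
`λ_{P₋}(h) = inf { Q_h(u)/∫_Ω|u|² : 0 ≠ u ∈ C_c^∞(Ω;ℂ) }`. -/
def lambdaP (Ω : Set E2) (A₁ A₂ B : E2 → ℝ) (h : ℝ) : ℝ :=
  sInf { r | ∃ u : E2 → ℂ, IsCptSmoothIn Ω u ∧ u ≠ 0 ∧
    r = pauliQ Ω A₁ A₂ B h u / ∫ x in Ω, ‖u x‖ ^ 2 }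

/-! ### Calculus of the partial derivatives `pdR` -/

theorem contDiff_pdR {f : E2 → ℝ} (hf : ContDiff ℝ (⊤ : ℕ∞) f) (i : Fin 2) :
    ContDiff ℝ (⊤ : ℕ∞) (pdR i f) := by
  have h : ContDiff ℝ (⊤ : ℕ∞) (fderiv ℝ f) := hf.fderiv_right (by simp)
  exact h.clm_apply contDiff_const

theorem differentiable_of_smooth {f : E2 → ℝ} (hf : ContDiff ℝ (⊤ : ℕ∞) f) :
    Differentiable ℝ f := hf.differentiable (by simp)

theorem pdR_add {f g : E2 → ℝ} (hf : ContDiff ℝ (⊤ : ℕ∞) f) (hg : ContDiff ℝ (⊤ : ℕ∞) g)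
    (i : Fin 2) (x : E2) :
    pdR i (fun y => f y + g y) x = pdR i f x + pdR i g x := by
  unfold pdR
  rw [fderiv_fun_add (differentiable_of_smooth hf x) (differentiable_of_smooth hg x)]
  rfl

theorem pdR_neg (f : E2 → ℝ) (i : Fin 2) (x : E2) :
    pdR i (fun y => -f y) x = -pdR i f x := by
  unfold pdR
  rw [fderiv_fun_neg]
  rfl

theorem pdR_mul {f g : E2 → ℝ} (hf : ContDiff ℝ (⊤ : ℕ∞) f) (hg : ContDiff ℝ (⊤ : ℕ∞) g)
    (i : Fin 2) (x : E2) :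
    pdR i (fun y => f y * g y) x = f x * pdR i g x + g x * pdR i f x := by
  unfold pdR
  rw [fderiv_fun_mul (differentiable_of_smooth hf x) (differentiable_of_smooth hg x)]
  rfl

theorem pdR_const_mul {f : E2 → ℝ} (hf : ContDiff ℝ (⊤ : ℕ∞) f) (c : ℝ)
    (i : Fin 2) (x : E2) :
    pdR i (fun y => c * f y) x = c * pdR i f x := by
  unfold pdR
  rw [fderiv_const_mul (differentiable_of_smooth hf x)]
  rfl

theorem pdR_exp {f : E2 → ℝ} (hf : ContDiff ℝ (⊤ : ℕ∞) f) (i : Fin 2) (x : E2) :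
    pdR i (fun y => Real.exp (f y)) x = Real.exp (f x) * pdR i f x := by
  unfold pdR
  rw [fderiv_exp (differentiable_of_smooth hf x)]
  rfl

theorem pdR_coord_self (x : E2) : pdR 0 (fun y : E2 => y 0) x = 1 := by
  have h : HasFDerivAt (fun y : E2 => y 0) (EuclideanSpace.proj (𝕜 := ℝ) (0 : Fin 2)) x :=
    (EuclideanSpace.proj (𝕜 := ℝ) (0 : Fin 2)).hasFDerivAt
  unfold pdR
  rw [h.fderiv]
  simp

theorem pdR_comm {f : E2 → ℝ} (hf : ContDiff ℝ (⊤ : ℕ∞) f) (x : E2) :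
    pdR 0 (pdR 1 f) x = pdR 1 (pdR 0 f) x := by
  have hd : DifferentiableAt ℝ (fderiv ℝ f) x :=
    ((hf.fderiv_right (m := (⊤ : ℕ∞)) (by simp)).differentiable (by simp)) x
  have key : ∀ i j : Fin 2, pdR i (pdR j f) x =
      fderiv ℝ (fderiv ℝ f) x (EuclideanSpace.single i 1) (EuclideanSpace.single j 1) := by
    intro i j
    change fderiv ℝ (fun y => fderiv ℝ f y (EuclideanSpace.single j 1)) x _ = _
    rw [fderiv_clm_apply hd (differentiableAt_const _)]
    simp
  rw [key, key]
  exact (hf.contDiffAt.isSymmSndFDerivAt (by simpa using WithTop.coe_le_coe.2 (le_top (a := (2 : ℕ∞))))) _ _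

theorem pdR_congr {f g : E2 → ℝ} {x : E2} (h : f =ᶠ[𝓝 x] g) (i : Fin 2) :
    pdR i f x = pdR i g x := by
  unfold pdR
  rw [h.fderiv_eq]

theorem pdR_eventuallyEq {f g : E2 → ℝ} {x : E2} (h : f =ᶠ[𝓝 x] g) (i : Fin 2) :
    pdR i f =ᶠ[𝓝 x] pdR i g :=
  h.eventuallyEq_nhds.mono fun _ hy => pdR_congr hy i

theorem pdR_const (c : ℝ) (i : Fin 2) (x : E2) : pdR i (fun _ => c) x = 0 := by
  simp [pdR]

theorem pdR_eq_zero_off {f : E2 → ℝ} {K : Set E2} (hK : IsCompact K)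
    (hf : ∀ x ∉ K, f x = 0) (i : Fin 2) : ∀ x ∉ K, pdR i f x = 0 := by
  intro x hx
  have : f =ᶠ[𝓝 x] fun _ => 0 := by
    filter_upwards [hK.isClosed.isOpen_compl.mem_nhds hx] with y hy using hf y hy
  rw [pdR_congr this, pdR_const]

theorem integrable_of_zero_off {f : E2 → ℝ} {K : Set E2} (hK : IsCompact K)
    (hc : Continuous f) (hf : ∀ x ∉ K, f x = 0) : Integrable f :=
  hc.integrable_of_hasCompactSupport (HasCompactSupport.intro hK hf)

/-- The divergence theorem for compactly supported functions, one coordinate at a time. -/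
theorem integral_pdR_eq_zero {f : E2 → ℝ} {K : Set E2} (hK : IsCompact K)
    (hs : ContDiff ℝ (⊤ : ℕ∞) f) (hf : ∀ x ∉ K, f x = 0) (i : Fin 2) :
    ∫ x, pdR i f x = 0 := by
  have h1 : Integrable (pdR i f) :=
    integrable_of_zero_off hK (contDiff_pdR hs i).continuous (pdR_eq_zero_off hK hf i)
  have h2 : Integrable f := integrable_of_zero_off hK hs.continuous hf
  have := integral_mul_fderiv_eq_neg_fderiv_mul_of_integrable (μ := volume)
    (f := fun _ : E2 => (1 : ℝ))
    (g := f) (v := EuclideanSpace.single i 1) (by simp) (by simp only [one_mul]; exact h1)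
    (by simpa using h2)
    (fun x _ => differentiableAt_const _) (fun x _ => differentiable_of_smooth hs x)
  simpa [pdR] using this

/-! ### Integral identities -/

/-- The factorisation of the Pauli operator, in real and imaginary parts `u = p + i q`: the
difference of the two integrands is the divergence of a compactly supported field. -/
theorem pauli_factor {p q A₁ A₂ : E2 → ℝ} {K : Set E2} (hK : IsCompact K)
    (hp : ContDiff ℝ (⊤ : ℕ∞) p) (hq : ContDiff ℝ (⊤ : ℕ∞) q)
    (hA₁ : ContDiff ℝ (⊤ : ℕ∞) A₁) (hA₂ : ContDiff ℝ (⊤ : ℕ∞) A₂)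
    (hp0 : ∀ x ∉ K, p x = 0) (hq0 : ∀ x ∉ K, q x = 0) (h : ℝ) :
    (∫ x, ((h * pdR 0 p x + A₁ x * q x) ^ 2 + (h * pdR 0 q x - A₁ x * p x) ^ 2
        + ((h * pdR 1 p x + A₂ x * q x) ^ 2 + (h * pdR 1 q x - A₂ x * p x) ^ 2)))
      - h * ∫ x, (pdR 0 A₂ x - pdR 1 A₁ x) * (p x ^ 2 + q x ^ 2)
    = ∫ x, ((h * pdR 0 p x + A₁ x * q x - h * pdR 1 q x + A₂ x * p x) ^ 2
        + (h * pdR 0 q x - A₁ x * p x + h * pdR 1 p x + A₂ x * q x) ^ 2) := by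
  have cp := hp.continuous
  have cq := hq.continuous
  have cA₁ := hA₁.continuous
  have cA₂ := hA₂.continuous
  have cd : ∀ {f : E2 → ℝ} (_ : ContDiff ℝ (⊤ : ℕ∞) f) (i : Fin 2), Continuous (pdR i f) :=
    fun hf i => (contDiff_pdR hf i).continuous
  have cp' := cd hp
  have cq' := cd hq
  have cA₁' := cd hA₁
  have cA₂' := cd hA₂
  have zp := pdR_eq_zero_off hK hp0
  have zq := pdR_eq_zero_off hK hq0
  have sp := contDiff_pdR hp
  have I1 : Integrable (fun x => (h * pdR 0 p x + A₁ x * q x) ^ 2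
      + (h * pdR 0 q x - A₁ x * p x) ^ 2
      + ((h * pdR 1 p x + A₂ x * q x) ^ 2 + (h * pdR 1 q x - A₂ x * p x) ^ 2)) :=
    integrable_of_zero_off hK (by fun_prop)
      (fun x hx => by simp [zp _ x hx, zq _ x hx, hp0 x hx, hq0 x hx])
  have I2 : Integrable (fun x => (pdR 0 A₂ x - pdR 1 A₁ x) * (p x ^ 2 + q x ^ 2)) :=
    integrable_of_zero_off hK (by fun_prop) (fun x hx => by simp [hp0 x hx, hq0 x hx])
  have I3 : Integrable (fun x => (h * pdR 0 p x + A₁ x * q x - h * pdR 1 q x + A₂ x * p x) ^ 2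
        + (h * pdR 0 q x - A₁ x * p x + h * pdR 1 p x + A₂ x * q x) ^ 2) :=
    integrable_of_zero_off hK (by fun_prop)
      (fun x hx => by simp [zp _ x hx, zq _ x hx, hp0 x hx, hq0 x hx])
  have s1 : ContDiff ℝ (⊤ : ℕ∞) (fun x => q x * pdR 1 p x) := hq.mul (sp 1)
  have s2 : ContDiff ℝ (⊤ : ℕ∞) (fun x => q x * pdR 0 p x) := hq.mul (sp 0)
  have s3 : ContDiff ℝ (⊤ : ℕ∞) (fun x => p x * p x + q x * q x) :=
    (hp.mul hp).add (hq.mul hq)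
  have s4 : ContDiff ℝ (⊤ : ℕ∞) (fun x => A₂ x * (p x * p x + q x * q x)) := hA₂.mul s3
  have s5 : ContDiff ℝ (⊤ : ℕ∞) (fun x => A₁ x * (p x * p x + q x * q x)) := hA₁.mul s3
  have t1 := contDiff_const.mul s1 (f := fun _ => 2 * h ^ 2)
  have t2 := contDiff_const.mul s2 (f := fun _ => -(2 * h ^ 2))
  have t4 := contDiff_const.mul s4 (f := fun _ => h)
  have t5 := contDiff_const.mul s5 (f := fun _ => -h)
  have D0 := integral_pdR_eq_zero hK (t1.add t4)
    (fun x hx => by simp [hp0 x hx, hq0 x hx]) 0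
  have D1 := integral_pdR_eq_zero hK (t2.add t5)
    (fun x hx => by simp [hp0 x hx, hq0 x hx]) 1
  have J0 : Integrable (pdR 0 _) := integrable_of_zero_off hK (cd (t1.add t4) 0)
    (pdR_eq_zero_off hK (fun x hx => by simp [hp0 x hx, hq0 x hx]) 0)
  have J1 : Integrable (pdR 1 _) := integrable_of_zero_off hK (cd (t2.add t5) 1)
    (pdR_eq_zero_off hK (fun x hx => by simp [hp0 x hx, hq0 x hx]) 1)
  have main : (∫ x, (((h * pdR 0 p x + A₁ x * q x - h * pdR 1 q x + A₂ x * p x) ^ 2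
        + (h * pdR 0 q x - A₁ x * p x + h * pdR 1 p x + A₂ x * q x) ^ 2)
      - ((h * pdR 0 p x + A₁ x * q x) ^ 2 + (h * pdR 0 q x - A₁ x * p x) ^ 2
        + ((h * pdR 1 p x + A₂ x * q x) ^ 2 + (h * pdR 1 q x - A₂ x * p x) ^ 2)))
      + h * ((pdR 0 A₂ x - pdR 1 A₁ x) * (p x ^ 2 + q x ^ 2))) = 0 := by
    have e := integral_add J0 J1
    rw [D0, D1, add_zero] at e
    rw [← e]
    refine integral_congr_ae (Eventually.of_forall fun x => ?_)
    dsimp only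
    rw [pdR_add t1 t4, pdR_add t2 t5, pdR_const_mul s1, pdR_const_mul s2, pdR_const_mul s4,
      pdR_const_mul s5, pdR_mul hq (sp 1), pdR_mul hq (sp 0), pdR_mul hA₂ s3, pdR_mul hA₁ s3,
      pdR_add (hp.mul hp) (hq.mul hq), pdR_add (hp.mul hp) (hq.mul hq), pdR_mul hp hp,
      pdR_mul hp hp, pdR_mul hq hq, pdR_mul hq hq, pdR_comm hp]
    ring
  rw [integral_add (by exact I3.sub I1) (I2.const_mul h), integral_sub I3 I1,
    integral_const_mul] at main
  linarith

/-- For compactly supported `P + i Q`, the `L²` norms of `2 ∂_z̄ (P + i Q)` and of the gradient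
agree; this is the case of zero potential. -/
theorem dbar_norm {P Q : E2 → ℝ} {K : Set E2} (hK : IsCompact K)
    (hP : ContDiff ℝ (⊤ : ℕ∞) P) (hQ : ContDiff ℝ (⊤ : ℕ∞) Q)
    (hP0 : ∀ x ∉ K, P x = 0) (hQ0 : ∀ x ∉ K, Q x = 0) :
    ∫ x, ((pdR 0 P x - pdR 1 Q x) ^ 2 + (pdR 0 Q x + pdR 1 P x) ^ 2)
      = ∫ x, (pdR 0 P x ^ 2 + pdR 0 Q x ^ 2 + (pdR 1 P x ^ 2 + pdR 1 Q x ^ 2)) := by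
  have := pauli_factor hK hP hQ (contDiff_const (c := (0 : ℝ))) (contDiff_const (c := (0 : ℝ)))
    hP0 hQ0 1
  simpa [pdR_const] using this.symm

/-- Poincaré's inequality, from integrating `∂₁ (x₁ P²)`. -/
theorem poincare {P : E2 → ℝ} {K : Set E2} (hK : IsCompact K)
    (hP : ContDiff ℝ (⊤ : ℕ∞) P) (hP0 : ∀ x ∉ K, P x = 0) {R : ℝ}
    (hR : ∀ x ∈ K, |x 0| ≤ R) :
    ∫ x, P x ^ 2 ≤ 4 * R ^ 2 * ∫ x, pdR 0 P x ^ 2 := by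
  have sx : ContDiff ℝ (⊤ : ℕ∞) (fun y : E2 => y 0) :=
    (EuclideanSpace.proj (𝕜 := ℝ) (0 : Fin 2)).contDiff
  have cP := hP.continuous
  have cP' := (contDiff_pdR hP 0).continuous
  have zP := pdR_eq_zero_off hK hP0
  have I1 : Integrable (fun x => P x ^ 2) :=
    integrable_of_zero_off hK (by fun_prop) (fun x hx => by simp [hP0 x hx])
  have I2 : Integrable (fun x => pdR 0 P x ^ 2) :=
    integrable_of_zero_off hK (by fun_prop) (fun x hx => by simp [zP _ x hx])
  have sF := sx.mul (hP.mul hP)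
  have zF : ∀ x ∉ K, x 0 * (P x * P x) = 0 := fun x hx => by simp [hP0 x hx]
  have D := integral_pdR_eq_zero hK sF zF 0
  have J : Integrable (pdR 0 _) := integrable_of_zero_off hK (contDiff_pdR sF 0).continuous
    (pdR_eq_zero_off hK zF 0)
  have le := integral_mono ((I1.const_mul (1 / 2)).sub (I2.const_mul (2 * R ^ 2))) J (fun x => by
    dsimp only [Pi.sub_apply]
    by_cases hx : x ∈ K
    · rw [pdR_mul sx (hP.mul hP), pdR_mul hP hP, pdR_coord_self]
      have h1 := hR x hx
      have h2 : x 0 ^ 2 ≤ R ^ 2 := sq_le_sq' (by linarith [abs_le.1 h1]) (abs_le.1 h1).2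
      nlinarith [sq_nonneg (P x + 2 * x 0 * pdR 0 P x),
        mul_le_mul_of_nonneg_right h2 (sq_nonneg (pdR 0 P x))]
    · rw [pdR_eq_zero_off hK zF 0 x hx, hP0 x hx, zP 0 x hx]
      simp)
  simp only [Pi.sub_apply] at le
  rw [integral_sub (I1.const_mul (1 / 2)) (I2.const_mul (2 * R ^ 2)), integral_const_mul,
    integral_const_mul, D] at le
  linarith

/-! ### The Pauli form after the substitution `u = e^{-ψ/h} (P + i Q)` -/

theorem pdC_pair {p q : E2 → ℝ} (hp : ContDiff ℝ (⊤ : ℕ∞) p)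
    (hq : ContDiff ℝ (⊤ : ℕ∞) q) (i : Fin 2) (x : E2) :
    pdC i (fun y => (p y : ℂ) + (q y : ℂ) * Complex.I) x
      = (pdR i p x : ℂ) + (pdR i q x : ℂ) * Complex.I := by
  have h1 : HasFDerivAt (fun y => (p y : ℂ)) (Complex.ofRealCLM.comp (fderiv ℝ p x)) x :=
    Complex.ofRealCLM.hasFDerivAt.comp x (differentiable_of_smooth hp x).hasFDerivAt
  have h2 : HasFDerivAt (fun y => (q y : ℂ)) (Complex.ofRealCLM.comp (fderiv ℝ q x)) x :=
    Complex.ofRealCLM.hasFDerivAt.comp x (differentiable_of_smooth hq x).hasFDerivAt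
  unfold pdC pdR
  rw [(h1.fun_add (h2.mul_const Complex.I)).fderiv]
  simp [mul_comm]

theorem norm_sq_pair (a b : ℝ) : ‖(a : ℂ) + (b : ℂ) * Complex.I‖ ^ 2 = a ^ 2 + b ^ 2 := by
  rw [Complex.sq_norm, Complex.normSq_add_mul_I]

/-- With the gauge `u = e^{-ψ/h} (P + i Q)` the Pauli form becomes
`h² ∫ e^{-2ψ/h} |2 ∂_z̄ (P + i Q)|²`. -/
theorem pauliQ_gauge {Ω K : Set E2} (hK : IsCompact K) (hKΩ : K ⊆ Ω) {ψ P Q : E2 → ℝ}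
    (hψ : ContDiff ℝ (⊤ : ℕ∞) ψ) (hP : ContDiff ℝ (⊤ : ℕ∞) P) (hQ : ContDiff ℝ (⊤ : ℕ∞) Q)
    (hP0 : ∀ x ∉ K, P x = 0) (hQ0 : ∀ x ∉ K, Q x = 0) {h : ℝ} (hh : h ≠ 0) :
    pauliQ Ω (fun x => -pdR 1 ψ x) (fun x => pdR 0 ψ x) (lapl ψ) h
      (fun x => ((Real.exp (-h⁻¹ * ψ x) * P x : ℝ) : ℂ)
        + ((Real.exp (-h⁻¹ * ψ x) * Q x : ℝ) : ℂ) * Complex.I)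
    = ∫ x, Real.exp (-h⁻¹ * ψ x) ^ 2 * h ^ 2 *
        ((pdR 0 P x - pdR 1 Q x) ^ 2 + (pdR 0 Q x + pdR 1 P x) ^ 2) := by
  have sE0 : ContDiff ℝ (⊤ : ℕ∞) (fun x => -h⁻¹ * ψ x) := contDiff_const.mul hψ
  have sE : ContDiff ℝ (⊤ : ℕ∞) (fun x => Real.exp (-h⁻¹ * ψ x)) := sE0.exp
  have sp := sE.mul hP
  have sq := sE.mul hQ
  have zp : ∀ x ∉ K, Real.exp (-h⁻¹ * ψ x) * P x = 0 := fun x hx => by simp [hP0 x hx]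
  have zq : ∀ x ∉ K, Real.exp (-h⁻¹ * ψ x) * Q x = 0 := fun x hx => by simp [hQ0 x hx]
  have key := pauli_factor hK sp sq (contDiff_pdR hψ 1).neg (contDiff_pdR hψ 0) zp zq h
  have zp' := pdR_eq_zero_off hK zp
  have zq' := pdR_eq_zero_off hK zq
  have notK : ∀ x ∉ Ω, x ∉ K := fun x hx hx' => hx (hKΩ hx')
  unfold pauliQ
  rw [setIntegral_eq_integral_of_forall_compl_eq_zero,
    setIntegral_eq_integral_of_forall_compl_eq_zero]
  rotate_left
  · intro x hx
    simp [hP0 x (notK x hx), hQ0 x (notK x hx)]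
  · intro x hx
    rw [pdC_pair sp sq, pdC_pair sp sq, zp' _ x (notK x hx), zq' _ x (notK x hx),
      zp' _ x (notK x hx), zq' _ x (notK x hx)]
    simp [hP0 x (notK x hx), hQ0 x (notK x hx)]
  have form : ∀ a b A p q : ℝ, ‖(h : ℂ) * ((a : ℂ) + (b : ℂ) * Complex.I)
      - Complex.I * (A : ℂ) * ((p : ℂ) + (q : ℂ) * Complex.I)‖ ^ 2
      = (h * a + A * q) ^ 2 + (h * b - A * p) ^ 2 := by
    intro a b A p q
    rw [← norm_sq_pair]
    congr 2
    push_cast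
    linear_combination (-(A : ℂ) * q) * Complex.I_sq
  simp only [pdC_pair sp sq, form, norm_sq_pair]
  have eB : ∀ x, pdR 0 (pdR 0 ψ) x - pdR 1 (fun y => -pdR 1 ψ y) x = lapl ψ x := by
    intro x
    rw [pdR_neg, lapl]
    ring
  simp only [eB] at key
  refine key.trans (integral_congr_ae (Eventually.of_forall fun x => ?_))
  have d : ∀ {f : E2 → ℝ} (_ : ContDiff ℝ (⊤ : ℕ∞) f) (i : Fin 2),
      h * pdR i (fun y => Real.exp (-h⁻¹ * ψ y) * f y) x
        = Real.exp (-h⁻¹ * ψ x) * (h * pdR i f x - f x * pdR i ψ x) := by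
    intro f hf i
    rw [pdR_mul sE hf, pdR_exp sE0, pdR_const_mul hψ]
    field_simp
    ring
  dsimp only
  rw [d hP, d hP, d hQ, d hQ]
  ring

/-- The Rayleigh quotient of any test function is at least a constant times `h² e^{2m/h}` when
`m ≤ ψ ≤ 0`: drop the weight, use Poincaré, and restore the weight. -/
theorem rayleigh_lower {Ω : Set E2} {ψ : E2 → ℝ} (hψ : ContDiff ℝ (⊤ : ℕ∞) ψ) {m R : ℝ}
    (hR0 : 0 < R) (hR : ∀ x ∈ Ω, |x 0| ≤ R)
    (hm : ∀ x ∈ Ω, m ≤ ψ x) (hneg : ∀ x ∈ Ω, ψ x ≤ 0) {h : ℝ} (hh : 0 < h)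
    {u : E2 → ℂ} (hu : IsCptSmoothIn Ω u) (hu0 : u ≠ 0) :
    (4 * R ^ 2)⁻¹ * h ^ 2 * Real.exp (2 * m / h) ≤
      pauliQ Ω (fun x => -pdR 1 ψ x) (fun x => pdR 0 ψ x) (lapl ψ) h u
        / ∫ x in Ω, ‖u x‖ ^ 2 := by
  obtain ⟨us, uc, uΩ⟩ := hu
  set K := tsupport u with hKdef
  have hK : IsCompact K := uc
  have u0 : ∀ x ∉ K, u x = 0 := fun x hx => image_eq_zero_of_notMem_tsupport hx
  have notK : ∀ x ∉ Ω, x ∉ K := fun x hx hx' => hx (uΩ hx')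
  set P : E2 → ℝ := fun x => Real.exp (h⁻¹ * ψ x) * (u x).re with hPdef
  set Q : E2 → ℝ := fun x => Real.exp (h⁻¹ * ψ x) * (u x).im with hQdef
  have sE : ContDiff ℝ (⊤ : ℕ∞) (fun x => Real.exp (h⁻¹ * ψ x)) :=
    (contDiff_const.mul hψ).exp
  have sP : ContDiff ℝ (⊤ : ℕ∞) P := sE.mul (Complex.reCLM.contDiff.comp us)
  have sQ : ContDiff ℝ (⊤ : ℕ∞) Q := sE.mul (Complex.imCLM.contDiff.comp us)
  have P0 : ∀ x ∉ K, P x = 0 := fun x hx => by simp [hPdef, u0 x hx]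
  have Q0 : ∀ x ∉ K, Q x = 0 := fun x hx => by simp [hQdef, u0 x hx]
  have ee : ∀ x, Real.exp (-h⁻¹ * ψ x) * Real.exp (h⁻¹ * ψ x) = 1 := by
    intro x
    rw [← Real.exp_add]
    simp
  have uP : ∀ x, Real.exp (-h⁻¹ * ψ x) * P x = (u x).re := by
    intro x
    rw [hPdef]
    dsimp only
    rw [← mul_assoc, ee, one_mul]
  have uQ : ∀ x, Real.exp (-h⁻¹ * ψ x) * Q x = (u x).im := by
    intro x
    rw [hQdef]
    dsimp only
    rw [← mul_assoc, ee, one_mul]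
  have ueq : u = fun x => ((Real.exp (-h⁻¹ * ψ x) * P x : ℝ) : ℂ)
        + ((Real.exp (-h⁻¹ * ψ x) * Q x : ℝ) : ℂ) * Complex.I := by
    funext x
    rw [uP, uQ, Complex.re_add_im]
  have g := pauliQ_gauge hK uΩ hψ sP sQ P0 Q0 hh.ne'
  rw [← ueq] at g
  have cψ := hψ.continuous
  have cu := us.continuous
  have cP := sP.continuous
  have cQ := sQ.continuous
  have cP' := fun i => (contDiff_pdR sP i).continuous
  have cQ' := fun i => (contDiff_pdR sQ i).continuous
  have zP := pdR_eq_zero_off hK P0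
  have zQ := pdR_eq_zero_off hK Q0
  have IP : Integrable (fun x => P x ^ 2) :=
    integrable_of_zero_off hK (by fun_prop) (fun x hx => by simp [P0 x hx])
  have IQ : Integrable (fun x => Q x ^ 2) :=
    integrable_of_zero_off hK (by fun_prop) (fun x hx => by simp [Q0 x hx])
  have IP' : ∀ i, Integrable (fun x => pdR i P x ^ 2) := fun i =>
    integrable_of_zero_off hK (by fun_prop) (fun x hx => by simp [zP i x hx])
  have IQ' : ∀ i, Integrable (fun x => pdR i Q x ^ 2) := fun i =>
    integrable_of_zero_off hK (by fun_prop) (fun x hx => by simp [zQ i x hx])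
  have Id : Integrable (fun x => (pdR 0 P x - pdR 1 Q x) ^ 2 + (pdR 0 Q x + pdR 1 P x) ^ 2) :=
    integrable_of_zero_off hK (by fun_prop) (fun x hx => by simp [zP _ x hx, zQ _ x hx])
  have Iw : Integrable (fun x => Real.exp (-h⁻¹ * ψ x) ^ 2 * h ^ 2 *
        ((pdR 0 P x - pdR 1 Q x) ^ 2 + (pdR 0 Q x + pdR 1 P x) ^ 2)) :=
    integrable_of_zero_off hK (by fun_prop) (fun x hx => by simp [zP _ x hx, zQ _ x hx])
  have Iu : Integrable (fun x => ‖u x‖ ^ 2) :=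
    integrable_of_zero_off hK (by fun_prop) (fun x hx => by simp [u0 x hx])
  have nrm : ∫ x in Ω, ‖u x‖ ^ 2 = ∫ x, ‖u x‖ ^ 2 :=
    setIntegral_eq_integral_of_forall_compl_eq_zero fun x hx => by simp [u0 x (notK x hx)]
  have npos : 0 < ∫ x, ‖u x‖ ^ 2 := by
    obtain ⟨x, hx⟩ := Function.ne_iff.1 hu0
    refine Continuous.integral_pos_of_hasCompactSupport_nonneg_nonzero (x := x) (by fun_prop)
      (HasCompactSupport.intro hK fun x hx => by simp [u0 x hx]) (fun y => by positivity) ?_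
    simpa using hx
  have wsq : ∀ x, Real.exp (-h⁻¹ * ψ x) ^ 2 = Real.exp (-(2 * ψ x / h)) := by
    intro x
    rw [← Real.exp_nat_mul]
    congr 1
    push_cast
    field_simp
  have nle : ∫ x, ‖u x‖ ^ 2 ≤ Real.exp (-(2 * m / h)) * ∫ x, (P x ^ 2 + Q x ^ 2) := by
    rw [← integral_const_mul]
    refine integral_mono Iu ((IP.add IQ).const_mul _) fun x => ?_
    dsimp only
    by_cases hx : x ∈ K
    · have e1 : ‖u x‖ ^ 2 = Real.exp (-h⁻¹ * ψ x) ^ 2 * (P x ^ 2 + Q x ^ 2) := by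
        rw [Complex.sq_norm, Complex.normSq_apply, ← uP, ← uQ]
        ring
      rw [e1, wsq]
      have := hm x (uΩ hx)
      gcongr
    · rw [u0 x hx, P0 x hx, Q0 x hx]
      simp
  have poin : ∫ x, (P x ^ 2 + Q x ^ 2) ≤ 4 * R ^ 2 *
      ∫ x, ((pdR 0 P x - pdR 1 Q x) ^ 2 + (pdR 0 Q x + pdR 1 P x) ^ 2) := by
    have a1 := poincare hK sP P0 (fun x hx => hR x (uΩ hx))
    have a2 := poincare hK sQ Q0 (fun x hx => hR x (uΩ hx))
    rw [dbar_norm hK sP sQ P0 Q0, integral_add IP IQ,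
      integral_add (by exact (IP' 0).add (IQ' 0)) (by exact (IP' 1).add (IQ' 1)),
      integral_add (IP' 0) (IQ' 0)]
    have a3 : 0 ≤ ∫ x, (pdR 1 P x ^ 2 + pdR 1 Q x ^ 2) :=
      integral_nonneg fun x => by positivity
    have a4 := mul_nonneg (by positivity : 0 ≤ 4 * R ^ 2) a3
    linarith
  have low : h ^ 2 * ∫ x, ((pdR 0 P x - pdR 1 Q x) ^ 2 + (pdR 0 Q x + pdR 1 P x) ^ 2) ≤
      pauliQ Ω (fun x => -pdR 1 ψ x) (fun x => pdR 0 ψ x) (lapl ψ) h u := by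
    rw [g, ← integral_const_mul]
    refine integral_mono (Id.const_mul _) Iw fun x => ?_
    dsimp only
    by_cases hx : x ∈ K
    · have h1 : 1 ≤ Real.exp (-h⁻¹ * ψ x) ^ 2 := by
        rw [wsq]
        refine Real.one_le_exp ?_
        have := div_nonneg (neg_nonneg.2 (hneg x (uΩ hx))) hh.le
        have e : -(2 * ψ x / h) = 2 * (-ψ x / h) := by ring
        linarith
      have h2 : 0 ≤ h ^ 2 * ((pdR 0 P x - pdR 1 Q x) ^ 2 + (pdR 0 Q x + pdR 1 P x) ^ 2) := by
        positivity
      nlinarith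
    · simp [zP _ x hx, zQ _ x hx]
  rw [nrm, le_div_iff₀ npos]
  refine le_trans ?_ low
  calc (4 * R ^ 2)⁻¹ * h ^ 2 * Real.exp (2 * m / h) * ∫ x, ‖u x‖ ^ 2
      ≤ (4 * R ^ 2)⁻¹ * h ^ 2 * Real.exp (2 * m / h) *
        (Real.exp (-(2 * m / h)) * (4 * R ^ 2 *
      ∫ x, ((pdR 0 P x - pdR 1 Q x) ^ 2 + (pdR 0 Q x + pdR 1 P x) ^ 2))) := by
        refine mul_le_mul_of_nonneg_left (nle.trans ?_) (by positivity)
        exact mul_le_mul_of_nonneg_left poin (Real.exp_pos _).le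
    _ = _ := by
        rw [Real.exp_neg]
        field_simp

/-! ### Cutoffs and the maximum principle -/

theorem exists_cutoff {K Ω : Set E2} (hK : IsCompact K) (hΩ : IsOpen Ω) (hKΩ : K ⊆ Ω) :
    ∃ (χ : E2 → ℝ) (L : Set E2), ContDiff ℝ (⊤ : ℕ∞) χ ∧ IsCompact L ∧ L ⊆ Ω ∧
      (∀ x ∈ K, χ x = 1) ∧ ∀ x ∉ L, χ x = 0 := by
  obtain ⟨L, hL, hKL, hLΩ⟩ := exists_compact_between hK hΩ hKΩ
  obtain ⟨χ, hχ, -, hs, h1⟩ := exists_contMDiff_support_eq_eq_one_iff (n := (⊤ : ℕ∞))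
    (modelWithCornersSelf ℝ E2) isOpen_interior hK.isClosed hKL
  refine ⟨χ, L, contMDiff_iff_contDiff.1 hχ, hL, hLΩ, fun x hx => (h1 x).1 hx, fun x hx => ?_⟩
  by_contra h
  have : x ∈ Function.support χ := h
  rw [hs] at this
  exact hx (interior_subset this)

/-- A smooth function on a neighbourhood of a compact set agrees on that set with a function
that is smooth on the whole plane. -/
theorem exists_smooth_extension {K U : Set E2} (hK : IsCompact K) (hU : IsOpen U) (hKU : K ⊆ U)
    {ψ : E2 → ℝ} (hψ : ContDiffOn ℝ (⊤ : ℕ∞) ψ U) :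
    ∃ φ : E2 → ℝ, ContDiff ℝ (⊤ : ℕ∞) φ ∧ ∀ x ∈ K, φ x = ψ x := by
  obtain ⟨χ, L, hχ, hL, hLU, h1, h0⟩ := exists_cutoff hK hU hKU
  refine ⟨fun x => χ x * ψ x, contDiff_iff_contDiffAt.2 fun x => ?_, fun x hx => by simp [h1 x hx]⟩
  by_cases hx : x ∈ U
  · exact hχ.contDiffAt.mul (hψ.contDiffAt (hU.mem_nhds hx))
  · refine (contDiffAt_const (c := (0 : ℝ))).congr_of_eventuallyEq ?_
    filter_upwards [hL.isClosed.isOpen_compl.mem_nhds fun h => hx (hLU h)] with y hy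
    simp [h0 y hy]

theorem pdR_pdR_nonpos {ψ : E2 → ℝ} (hψ : ContDiff ℝ (⊤ : ℕ∞) ψ) {x : E2}
    (hmax : IsLocalMax ψ x) (i : Fin 2) : pdR i (pdR i ψ) x ≤ 0 := by
  by_contra! hpos
  set e : E2 := EuclideanSpace.single i 1 with he
  have line : ∀ t : ℝ, HasDerivAt (fun s : ℝ => x + s • e) e t := fun t => by
    simpa using ((hasDerivAt_id t).smul_const e).const_add x
  have dline : ∀ {f : E2 → ℝ} (_ : ContDiff ℝ (⊤ : ℕ∞) f) (t : ℝ),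
      HasDerivAt (fun s : ℝ => f (x + s • e)) (pdR i f (x + t • e)) t := fun {f} hf t =>
    (differentiable_of_smooth hf _).hasFDerivAt.comp_hasDerivAt t (line t)
  set g : ℝ → ℝ := fun s => ψ (x + s • e) with hg
  have dg : deriv g = fun t => pdR i ψ (x + t • e) := funext fun t => (dline hψ t).deriv
  have ddg : deriv (deriv g) 0 = pdR i (pdR i ψ) x := by
    rw [dg, (dline (contDiff_pdR hψ i) 0).deriv]
    simp
  have cont : Tendsto (fun s : ℝ => x + s • e) (𝓝 0) (𝓝 x) := by
    simpa using (line 0).continuousAt.tendsto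
  have gmax : IsLocalMax g 0 := by
    filter_upwards [cont.eventually hmax] with s hs
    simpa [hg] using hs
  have gmin : IsLocalMin g 0 :=
    isLocalMin_of_deriv_deriv_pos (by rw [ddg]; exact hpos) gmax.deriv_eq_zero
      (dline hψ 0).continuousAt
  -- Both a local maximum and a local minimum, `g` is locally constant.
  have gc : g =ᶠ[𝓝 0] fun _ => g 0 := by
    filter_upwards [gmax, gmin] with s h1 h2 using le_antisymm h1 h2
  have : deriv (deriv g) 0 = 0 := by
    rw [gc.deriv.deriv_eq]
    simp
  linarith

/-- The maximum principle: a strictly subharmonic function with zero boundary values is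
negative inside. -/
theorem neg_of_subharmonic {Ω : Set E2} (hΩo : IsOpen Ω) (hΩb : Bornology.IsBounded Ω)
    {ψ : E2 → ℝ} (hψ : ContDiff ℝ (⊤ : ℕ∞) ψ) (hpos : ∀ x ∈ Ω, 0 < lapl ψ x)
    (hbd : ∀ x ∈ frontier Ω, ψ x = 0) : ∀ x ∈ Ω, ψ x < 0 := by
  intro x hx
  obtain ⟨y, hy, hmax⟩ := hΩb.isCompact_closure.exists_isMaxOn ⟨x, subset_closure hx⟩
    hψ.continuous.continuousOn
  have noint : ∀ z ∈ Ω, ¬ ∀ w ∈ Ω, ψ w ≤ ψ z := by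
    intro z hz hall
    have lm : IsLocalMax ψ z := by
      filter_upwards [hΩo.mem_nhds hz] with w hw using hall w hw
    have h0 := pdR_pdR_nonpos hψ lm 0
    have h1 := pdR_pdR_nonpos hψ lm 1
    have := hpos z hz
    unfold lapl at this
    linarith
  have hyf : y ∉ Ω := fun h => noint y h fun w hw => hmax (subset_closure hw)
  have y0 : ψ y = 0 := hbd y (by rw [hΩo.frontier_eq]; exact ⟨hy, hyf⟩)
  by_contra! hge
  refine noint x hx fun w hw => ?_
  have : ψ w ≤ ψ y := hmax (subset_closure hw)
  linarith

/-! ### The upper bound and the limit -/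

/-- Testing with `e^{-ψ/h} χ`, where `χ = 1` on `{ψ ≤ -ε}`. -/
theorem rayleigh_upper {Ω : Set E2} (hΩo : IsOpen Ω) (hΩb : Bornology.IsBounded Ω)
    {ψ : E2 → ℝ} (hψ : ContDiff ℝ (⊤ : ℕ∞) ψ)
    (hbd : ∀ x ∈ frontier Ω, ψ x = 0) {m ε : ℝ} (hε : 0 < ε) (hmε : m + ε ≤ -ε)
    (hmin : ∃ x ∈ Ω, ψ x < m + ε) :
    ∃ C > 0, ∀ h > 0, ∃ u : E2 → ℂ, IsCptSmoothIn Ω u ∧ u ≠ 0 ∧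
      pauliQ Ω (fun x => -pdR 1 ψ x) (fun x => pdR 0 ψ x) (lapl ψ) h u
        / (∫ x in Ω, ‖u x‖ ^ 2) ≤ C * h ^ 2 * Real.exp ((2 * m + 4 * ε) / h) := by
  have cψ := hψ.continuous
  have hK : IsCompact (closure Ω ∩ {x | ψ x ≤ -ε}) :=
    hΩb.isCompact_closure.inter_right (isClosed_le cψ continuous_const)
  have hKΩ : closure Ω ∩ {x | ψ x ≤ -ε} ⊆ Ω := by
    rintro x ⟨hx, hx'⟩
    by_contra hn
    have h0 := hbd x (by rw [hΩo.frontier_eq]; exact ⟨hx, hn⟩)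
    simp only [Set.mem_ofPred_eq] at hx'
    linarith
  obtain ⟨χ, L, hχ, hL, hLΩ, h1, h0⟩ := exists_cutoff hK hΩo hKΩ
  set V : Set E2 := Ω ∩ {x | ψ x < m + ε} with hV
  have hVo : IsOpen V := hΩo.inter (isOpen_lt cψ continuous_const)
  have hVpos : 0 < volume.real V := by
    obtain ⟨x, hx, hx'⟩ := hmin
    exact ENNReal.toReal_pos (hVo.measure_pos volume ⟨x, hx, hx'⟩).ne'
      (hΩb.subset Set.inter_subset_left).measure_lt_top.ne
  have hVfin : volume V ≠ ⊤ := (hΩb.subset Set.inter_subset_left).measure_lt_top.ne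
  have hV1 : ∀ x ∈ V, χ x = 1 := fun x hx =>
    h1 x ⟨subset_closure hx.1, (le_of_lt hx.2).trans hmε⟩
  have cχ := hχ.continuous
  have cχ' := fun i => (contDiff_pdR hχ i).continuous
  have zχ := pdR_eq_zero_off hL h0
  have ID : Integrable (fun x => pdR 0 χ x ^ 2 + pdR 1 χ x ^ 2) :=
    integrable_of_zero_off hL (by fun_prop) fun x hx => by simp [zχ _ x hx]
  set D : ℝ := ∫ x, (pdR 0 χ x ^ 2 + pdR 1 χ x ^ 2) with hD
  have hD0 : 0 ≤ D := integral_nonneg fun x => by positivity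
  refine ⟨(D + 1) / volume.real V, by positivity, fun h hh => ?_⟩
  have wsq : ∀ x, Real.exp (-h⁻¹ * ψ x) ^ 2 = Real.exp (-(2 * ψ x / h)) := by
    intro x
    rw [← Real.exp_nat_mul]
    congr 1
    push_cast
    field_simp
  have g := pauliQ_gauge hL hLΩ hψ hχ (contDiff_const (c := (0 : ℝ))) h0 (fun _ _ => rfl) hh.ne'
  set u : E2 → ℂ := fun x => ((Real.exp (-h⁻¹ * ψ x) * χ x : ℝ) : ℂ)
        + ((Real.exp (-h⁻¹ * ψ x) * 0 : ℝ) : ℂ) * Complex.I with hu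
  have us : ContDiff ℝ (⊤ : ℕ∞) u := by
    have s1 : ContDiff ℝ (⊤ : ℕ∞) (fun x => Real.exp (-h⁻¹ * ψ x) * χ x) :=
      (contDiff_const.mul hψ).exp.mul hχ
    have s2 : ContDiff ℝ (⊤ : ℕ∞) (fun x => Real.exp (-h⁻¹ * ψ x) * 0) :=
      (contDiff_const.mul hψ).exp.mul contDiff_const
    exact (Complex.ofRealCLM.contDiff.comp s1).add
      ((Complex.ofRealCLM.contDiff.comp s2).mul contDiff_const)
  have u0 : ∀ x ∉ L, u x = 0 := fun x hx => by simp [hu, h0 x hx]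
  have usq : ∀ x, ‖u x‖ ^ 2 = Real.exp (-(2 * ψ x / h)) * χ x ^ 2 := by
    intro x
    rw [hu]
    dsimp only
    rw [norm_sq_pair, ← wsq]
    ring
  have usupp : tsupport u ⊆ L :=
    closure_minimal (fun x hx => by_contra fun hn => hx (u0 x hn)) hL.isClosed
  have une : u ≠ 0 := by
    obtain ⟨x, hx, hx'⟩ := hmin
    intro hz
    have := usq x
    rw [hz, hV1 x ⟨hx, hx'⟩] at this
    simp only [Pi.zero_apply, norm_zero, one_pow, mul_one] at this
    have := Real.exp_pos (-(2 * ψ x / h))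
    have z : (0 : ℝ) ^ 2 = 0 := by norm_num
    linarith
  refine ⟨u, ⟨us, HasCompactSupport.intro hL u0, usupp.trans hLΩ⟩, une, ?_⟩
  have cu := us.continuous
  have Iu : Integrable (fun x => ‖u x‖ ^ 2) :=
    integrable_of_zero_off hL (by fun_prop) (fun x hx => by simp [u0 x hx])
  have nlow : Real.exp (-(2 * (m + ε) / h)) * volume.real V ≤ ∫ x in Ω, ‖u x‖ ^ 2 := by
    calc Real.exp (-(2 * (m + ε) / h)) * volume.real V
        = ∫ _ in V, Real.exp (-(2 * (m + ε) / h)) := by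
          rw [setIntegral_const, smul_eq_mul, mul_comm]
      _ ≤ ∫ x in V, ‖u x‖ ^ 2 := by
          refine setIntegral_mono_on (integrableOn_const hVfin) Iu.integrableOn
            hVo.measurableSet fun x hx => ?_
          rw [usq, hV1 x hx, one_pow, mul_one]
          have : ψ x ≤ m + ε := le_of_lt hx.2
          gcongr
      _ ≤ ∫ x in Ω, ‖u x‖ ^ 2 :=
          setIntegral_mono_set Iu.integrableOn (Eventually.of_forall fun x => by positivity)
            (Eventually.of_forall fun x hx => hx.1)
  have qup : pauliQ Ω (fun x => -pdR 1 ψ x) (fun x => pdR 0 ψ x) (lapl ψ) h u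
      ≤ Real.exp (2 * ε / h) * h ^ 2 * D := by
    rw [g, hD, ← integral_const_mul]
    refine integral_mono (integrable_of_zero_off hL ?_ fun x hx => ?_) (ID.const_mul _) fun x => ?_
    · simp only [pdR_const]
      fun_prop
    · simp [zχ _ x hx, pdR_const]
    dsimp only
    simp only [pdR_const, sub_zero, zero_add]
    by_cases hx : x ∈ L
    · by_cases hψx : ψ x < -ε
      · -- Near such a point the cutoff is identically `1`.
        have ev : χ =ᶠ[𝓝 x] fun _ => 1 := by
          filter_upwards [hΩo.mem_nhds (hLΩ hx),
            (isOpen_lt cψ continuous_const).mem_nhds hψx] with y hy hy'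
          exact h1 y ⟨subset_closure hy, le_of_lt hy'⟩
        rw [pdR_congr ev, pdR_congr ev, pdR_const, pdR_const]
        simp
      · have e : Real.exp (-h⁻¹ * ψ x) ^ 2 ≤ Real.exp (2 * ε / h) := by
          rw [wsq, ← neg_div]
          gcongr
          linarith
        gcongr
    · simp [zχ _ x hx]
  have nl0 : 0 < Real.exp (-(2 * (m + ε) / h)) * volume.real V := by positivity
  rw [div_le_iff₀ (nl0.trans_le nlow)]
  refine qup.trans ?_
  calc Real.exp (2 * ε / h) * h ^ 2 * D ≤ Real.exp (2 * ε / h) * h ^ 2 * (D + 1) := by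
        gcongr
        linarith
    _ = (D + 1) / volume.real V * h ^ 2 * Real.exp ((2 * m + 4 * ε) / h)
          * (Real.exp (-(2 * (m + ε) / h)) * volume.real V) := by
        have : Real.exp (2 * ε / h)
            = Real.exp ((2 * m + 4 * ε) / h) * Real.exp (-(2 * (m + ε) / h)) := by
          rw [← Real.exp_add]
          congr 1
          ring
        rw [this]
        field_simp
    _ ≤ _ := by gcongr

theorem log_bound_eq {c a h : ℝ} (hc : 0 < c) (hh : 0 < h) :
    h * Real.log (c * h ^ 2 * Real.exp (a / h)) = h * Real.log c + 2 * (h * Real.log h) + a := by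
  rw [Real.log_mul (by positivity) (Real.exp_pos _).ne', Real.log_mul hc.ne' (by positivity),
    Real.log_pow, Real.log_exp]
  push_cast
  field_simp

theorem log_bound_tendsto (c a : ℝ) :
    Tendsto (fun h : ℝ => h * Real.log c + 2 * (h * Real.log h) + a) (𝓝[>] 0) (𝓝 a) := by
  have hc : Continuous (fun h : ℝ => h * Real.log c + 2 * (h * Real.log h) + a) := by
    have := Real.continuous_mul_log
    fun_prop
  have := hc.tendsto 0
  simp only [zero_mul, mul_zero, zero_add] at this
  exact this.mono_left nhdsWithin_le_nhds

/-- The limit for a potential that is smooth on the whole plane. -/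
theorem tendsto_of_smooth {Ω : Set E2} (hΩo : IsOpen Ω) (hΩne : Ω.Nonempty)
    (hΩb : Bornology.IsBounded Ω) {ψ : E2 → ℝ} (hψ : ContDiff ℝ (⊤ : ℕ∞) ψ)
    (hpos : ∀ x ∈ Ω, 0 < lapl ψ x) (hbd : ∀ x ∈ frontier Ω, ψ x = 0) :
    Tendsto
      (fun h : ℝ =>
        h * Real.log (lambdaP Ω (fun x => -pdR 1 ψ x) (fun x => pdR 0 ψ x) (lapl ψ) h))
      (𝓝[>] 0) (𝓝 (2 * sInf (ψ '' Ω))) := by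
  have hneg := neg_of_subharmonic hΩo hΩb hψ hpos hbd
  set m := sInf (ψ '' Ω) with hm
  have bdd : BddBelow (ψ '' Ω) :=
    (hΩb.isCompact_closure.bddBelow_image hψ.continuous.continuousOn).mono
      (Set.image_mono subset_closure)
  have hmle : ∀ x ∈ Ω, m ≤ ψ x := fun x hx => csInf_le bdd ⟨x, hx, rfl⟩
  have hm0 : m < 0 := by
    obtain ⟨x, hx⟩ := hΩne
    exact (hmle x hx).trans_lt (hneg x hx)
  obtain ⟨R, hR0, hR⟩ := hΩb.exists_pos_norm_le
  have hR' : ∀ x ∈ Ω, |x 0| ≤ R := fun x hx => (PiLp.norm_apply_le x 0).trans (hR x hx)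
  have near : ∀ ε > 0, ∃ x ∈ Ω, ψ x < m + ε := by
    intro ε hε
    obtain ⟨_, ⟨x, hx, rfl⟩, hlt⟩ := exists_lt_of_csInf_lt (hΩne.image ψ)
      (show sInf (ψ '' Ω) < m + ε by linarith)
    exact ⟨x, hx, hlt⟩
  set c : ℝ := (4 * R ^ 2)⁻¹ with hc
  have hc0 : 0 < c := by positivity
  have lowset : ∀ h > 0, ∀ r ∈ { r | ∃ u : E2 → ℂ, IsCptSmoothIn Ω u ∧ u ≠ 0 ∧
      r = pauliQ Ω (fun x => -pdR 1 ψ x) (fun x => pdR 0 ψ x) (lapl ψ) h u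
        / ∫ x in Ω, ‖u x‖ ^ 2 }, c * h ^ 2 * Real.exp (2 * m / h) ≤ r := by
    rintro h hh r ⟨u, hu, hu0, rfl⟩
    exact rayleigh_lower hψ hR0 hR' hmle (fun x hx => (hneg x hx).le) hh hu hu0
  have lower : ∀ h > 0, c * h ^ 2 * Real.exp (2 * m / h) ≤
      lambdaP Ω (fun x => -pdR 1 ψ x) (fun x => pdR 0 ψ x) (lapl ψ) h := by
    intro h hh
    obtain ⟨C, -, hC⟩ := rayleigh_upper hΩo hΩb hψ hbd (m := m) (ε := -m / 2) (by linarith)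
      (by linarith) (near _ (by linarith))
    obtain ⟨u, hu, hu0, -⟩ := hC h hh
    exact le_csInf ⟨_, u, hu, hu0, rfl⟩ (lowset h hh)
  have lpos : ∀ h > 0, 0 < lambdaP Ω (fun x => -pdR 1 ψ x) (fun x => pdR 0 ψ x) (lapl ψ) h :=
    fun h hh => lt_of_lt_of_le (by positivity) (lower h hh)
  refine tendsto_order.2 ⟨fun a ha => ?_, fun b hb => ?_⟩
  · filter_upwards [(log_bound_tendsto c (2 * m)).eventually (lt_mem_nhds ha),
      self_mem_nhdsWithin] with h h1 hh
    have hh : 0 < h := hh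
    rw [← log_bound_eq hc0 hh] at h1
    refine h1.trans_le (mul_le_mul_of_nonneg_left ?_ hh.le)
    exact Real.log_le_log (by positivity) (lower h hh)
  · set ε : ℝ := min (-m / 2) ((b - 2 * m) / 8) with hε
    have hε0 : 0 < ε := lt_min (by linarith) (by linarith)
    have hε1 : ε ≤ -m / 2 := min_le_left _ _
    have hε2 : ε ≤ (b - 2 * m) / 8 := min_le_right _ _
    obtain ⟨C, hC0, hC⟩ := rayleigh_upper hΩo hΩb hψ hbd (m := m) hε0
      (by linarith) (near _ hε0)
    filter_upwards [(log_bound_tendsto C (2 * m + 4 * ε)).eventually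
      (gt_mem_nhds (show 2 * m + 4 * ε < b by linarith)), self_mem_nhdsWithin] with h h1 hh
    have hh : 0 < h := hh
    rw [← log_bound_eq hC0 hh] at h1
    refine lt_of_le_of_lt (mul_le_mul_of_nonneg_left ?_ hh.le) h1
    obtain ⟨u, hu, hu0, hle⟩ := hC h hh
    refine Real.log_le_log (lpos h hh) (le_trans ?_ hle)
    exact csInf_le ⟨_, lowset h hh⟩ ⟨u, hu, hu0, rfl⟩

/-- The Pauli form, hence its infimum, only sees the data inside `Ω`. -/
theorem lambdaP_congr {Ω : Set E2} (hΩ : MeasurableSet Ω) {A₁ A₂ B A₁' A₂' B' : E2 → ℝ}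
    (h₁ : ∀ x ∈ Ω, A₁ x = A₁' x) (h₂ : ∀ x ∈ Ω, A₂ x = A₂' x) (h₃ : ∀ x ∈ Ω, B x = B' x) (h : ℝ) :
    lambdaP Ω A₁ A₂ B h = lambdaP Ω A₁' A₂' B' h := by
  have : ∀ u, pauliQ Ω A₁ A₂ B h u = pauliQ Ω A₁' A₂' B' h u := by
    intro u
    unfold pauliQ
    congr 1
    · refine setIntegral_congr_fun hΩ fun x hx => ?_
      rw [h₁ x hx, h₂ x hx]
    · congr 1
      refine setIntegral_congr_fun hΩ fun x hx => ?_
      rw [h₃ x hx]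
  unfold lambdaP
  simp only [this]

/-- main theorem: if `B > 0` on a neighborhood of `closure Ω`, `Δψ = B` in `Ω`,
`ψ = 0` on `∂Ω`, then `h log λ_{P₋}(h) → 2 inf_Ω ψ` as `h → 0⁺`. -/
theorem stmt5 (Ω : Set E2) (hΩo : IsOpen Ω) (hΩne : Ω.Nonempty)
    (hΩb : Bornology.IsBounded Ω)
    (hsc : SimplyConnectedSpace Ω)
    (U : Set E2) (hU : IsOpen U) (hclU : closure Ω ⊆ U)
    (B ψ : E2 → ℝ)
    (hBsm : ContDiffOn ℝ (⊤ : ℕ∞) B U) (hBpos : ∀ x ∈ closure Ω, 0 < B x)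
    (hψsm : ContDiffOn ℝ (⊤ : ℕ∞) ψ U)
    (hΔ : ∀ x ∈ Ω, lapl ψ x = B x)
    (hbd : ∀ x ∈ frontier Ω, ψ x = 0) :
    Tendsto
      (fun h : ℝ =>
        h * Real.log (lambdaP Ω (fun x => -pdR 1 ψ x) (fun x => pdR 0 ψ x) B h))
      (𝓝[>] 0) (𝓝 (2 * sInf (ψ '' Ω))) := by
  obtain ⟨φ, hφ, heq⟩ := exists_smooth_extension hΩb.isCompact_closure hU hclU hψsm
  have ev : ∀ x ∈ Ω, ψ =ᶠ[𝓝 x] φ := fun x hx => by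
    filter_upwards [hΩo.mem_nhds hx] with y hy using (heq y (subset_closure hy)).symm
  have hlap : ∀ x ∈ Ω, B x = lapl φ x := by
    intro x hx
    rw [← hΔ x hx]
    unfold lapl
    rw [pdR_congr (pdR_eventuallyEq (ev x hx) 0), pdR_congr (pdR_eventuallyEq (ev x hx) 1)]
  have himg : ψ '' Ω = φ '' Ω :=
    Set.image_congr fun x hx => (heq x (subset_closure hx)).symm
  have hl : ∀ h, lambdaP Ω (fun x => -pdR 1 ψ x) (fun x => pdR 0 ψ x) B h
      = lambdaP Ω (fun x => -pdR 1 φ x) (fun x => pdR 0 φ x) (lapl φ) h := fun h =>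
    lambdaP_congr hΩo.measurableSet (fun x hx => by rw [pdR_congr (ev x hx)])
      (fun x hx => pdR_congr (ev x hx) 0) hlap h
  simp only [hl, himg]
  refine tendsto_of_smooth hΩo hΩne hΩb hφ (fun x hx => ?_) fun x hx => ?_
  · rw [← hlap x hx]
    exact hBpos x (subset_closure hx)
  · rw [heq x (frontier_subset_closure hx), hbd x hx]
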